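/- Let A be a restricted quantized algebra over k (char k = p > 2) which is flat over k[[h]] (no h-torsion). Define s(x) = x^p − h^{p-1} x^{[p]}. Then s is additive, multiplicative, its image is central in A, and s(hx) = 0 for all x; hence s descends to a central multiplicative splitting map A/h → A, exhibiting A as a Frobenius-constant quantization of A/h. -/

import Mathlib

/-! Universal quantized polynomials.  We model the free quantized algebra
`Q(x,y)` (the Rees algebra of the PBW filtration on the free associative
algebra on two generators) inside the polynomial ring in one central variable
`h` over the free associative algebra: `x` corresponds to `Xe = x·h`,
`y` to `Ye = y·h`, and `h` to the polynomial variable `he`. -/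

/-- Ambient ring: polynomials in a central variable `h` over the free
associative `k`-algebra on two generators. -/
abbrev Amb (k : Type*) [Field k] : Type _ := Polynomial (FreeAlgebra k (Fin 2))

/-- The image of the generator `x` in the Rees-algebra model. -/
noncomputable def Xe (k : Type*) [Field k] : Amb k :=
  Polynomial.C (FreeAlgebra.ι k (0 : Fin 2)) * Polynomial.X

/-- The image of the generator `y` in the Rees-algebra model. -/
noncomputable def Ye (k : Type*) [Field k] : Amb k :=
  Polynomial.C (FreeAlgebra.ι k (1 : Fin 2)) * Polynomial.X

/-- The central parameter `h` in the Rees-algebra model. -/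
noncomputable def he (k : Type*) [Field k] : Amb k := Polynomial.X

/-- Evaluation relation for quantized polynomials.  `QEval k hA bra u v q w`
holds if the quantized polynomial `q` (an element of the free quantized algebra
on two generators `x, y`) evaluates to `w` when `x ↦ u`, `y ↦ v`, `h ↦ hA`,
products map to products, `k`-linear structure to `k`-linear structure, and the
universal bracket `{a,b}` (characterized by `h·{a,b} = a*b - b*a`) maps to the
bracket `bra` of the target algebra. -/
inductive QEval (k : Type*) [Field k] {A : Type*} [Ring A] [Algebra k A]
    (hA : A) (bra : A → A → A) (u v : A) : Amb k → A → Prop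
  | X : QEval k hA bra u v (Xe k) u
  | Y : QEval k hA bra u v (Ye k) v
  | h : QEval k hA bra u v (he k) hA
  | add {a b : Amb k} {x y : A} : QEval k hA bra u v a x → QEval k hA bra u v b y →
      QEval k hA bra u v (a + b) (x + y)
  | smul (c : k) {a : Amb k} {x : A} : QEval k hA bra u v a x →
      QEval k hA bra u v (c • a) (c • x)
  | mul {a b : Amb k} {x y : A} : QEval k hA bra u v a x → QEval k hA bra u v b y →
      QEval k hA bra u v (a * b) (x * y)
  | bracket {a b c : Amb k} {x y : A} : QEval k hA bra u v a x → QEval k hA bra u v b y →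
      he k * c = a * b - b * a → QEval k hA bra u v c (bra x y)

/-- `IsLval k p hA bra u v w` : `w` is the value at `(u, v)` of the universal
(Jacobson) polynomial `L(x,y)`, i.e. of the canonical quantized polynomial `L`
with `h^(p-1) · L = (x+y)^p - x^p - y^p` in the free quantized algebra. -/
def IsLval (k : Type*) [Field k] {A : Type*} [Ring A] [Algebra k A]
    (p : ℕ) (hA : A) (bra : A → A → A) (u v w : A) : Prop :=
  ∃ L : Amb k, he k ^ (p - 1) * L = (Xe k + Ye k) ^ p - Xe k ^ p - Ye k ^ p ∧
    QEval k hA bra u v L w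

/-- `IsPval k p hA bra u v w` : `w` is the value at `(u, v)` of the canonical
universal quantized polynomial `P(x,y)` with
`h^(p-1) · P = (x*y)^p - x^p * y^p` in the free quantized algebra. -/
def IsPval (k : Type*) [Field k] {A : Type*} [Ring A] [Algebra k A]
    (p : ℕ) (hA : A) (bra : A → A → A) (u v w : A) : Prop :=
  ∃ P : Amb k, he k ^ (p - 1) * P = (Xe k * Ye k) ^ p - Xe k ^ p * Ye k ^ p ∧
    QEval k hA bra u v P w

/-! ### Helper lemmas -/

theorem aux_choose {E : Type*} [Ring E] {p : ℕ} (hp : p.Prime) (hE : (p : E) = 0) :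
    ∀ m : ℕ, m < p → (((p - 1).choose m : ℕ) : E) = (-1) ^ m := by
  intro m
  induction m with
  | zero => intro _; simp
  | succ m ih =>
    intro hm
    have h1 : p.choose (m + 1) = (p - 1).choose m + (p - 1).choose (m + 1) := by
      obtain ⟨q, rfl⟩ : ∃ q, p = q + 1 := ⟨p - 1, by have := hp.pos; omega⟩
      simp [Nat.choose_succ_succ]
    obtain ⟨c, hc⟩ := hp.dvd_choose_self (Nat.succ_ne_zero m) hm
    have h2 : ((p.choose (m + 1) : ℕ) : E) = 0 := by
      rw [hc]; push_cast; rw [hE, zero_mul]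
    rw [h1] at h2
    push_cast at h2
    rw [ih (by omega)] at h2
    rw [pow_succ, mul_neg, mul_one]
    exact eq_neg_of_add_eq_zero_right h2

theorem aux_sub_pow {E : Type*} [Ring E] {p : ℕ} (hp : p.Prime) (hp2 : 2 < p) (hE : (p : E) = 0)
    (a b : E) (hab : Commute a b) :
    (a - b) ^ (p - 1) = ∑ m ∈ Finset.range p, a ^ m * b ^ (p - 1 - m) := by
  have hev : Even (p - 1) := hp.even_sub_one (by omega)
  rw [sub_eq_add_neg, (hab.neg_right).add_pow, Nat.sub_add_cancel hp.one_le]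
  refine Finset.sum_congr rfl fun m hm => ?_
  rw [Finset.mem_range] at hm
  rw [aux_choose hp hE m hm, neg_pow b, mul_assoc, mul_assoc]
  congr 1
  rw [((Commute.neg_one_right (b ^ (p - 1 - m))).pow_right m).eq, ← mul_assoc, ← pow_add,
    Nat.sub_add_cancel (by omega), hev.neg_one_pow, one_mul]

theorem aux_ad {R : Type*} [Ring R] {p : ℕ} (hp : p.Prime) (hp2 : 2 < p) (hR : (p : R) = 0)
    (a x : R) : (fun z => a * z - z * a)^[p - 1] x
      = ∑ m ∈ Finset.range p, a ^ m * x * a ^ (p - 1 - m) := by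
  let l : Module.End ℤ R := LinearMap.mulLeft ℤ a
  let r : Module.End ℤ R := LinearMap.mulRight ℤ a
  have hc : Commute l r := by
    apply LinearMap.ext; intro z; simp [l, r, mul_assoc]
  have hE : ((p : ℕ) : Module.End ℤ R) = 0 := by
    apply LinearMap.ext; intro z
    simp [hR]
  have h1 := aux_sub_pow hp hp2 hE l r hc
  have h2 := congrArg (fun f : Module.End ℤ R => f x) h1
  have h3 : ∀ n : ℕ, (fun z => a * z - z * a)^[n] x = ((l - r) ^ n) x := by
    intro n
    induction n with
    | zero => simp
    | succ n ih => rw [Function.iterate_succ_apply', ih, pow_succ']; simp [l, r]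
  have hl : ∀ n z, (l ^ n) z = a ^ n * z := by
    intro n z; simp [l, LinearMap.pow_mulLeft]
  have hr : ∀ n z, (r ^ n) z = z * a ^ n := by
    intro n z; simp [r, LinearMap.pow_mulRight]
  rw [h3]
  refine h2.trans ?_
  simp [LinearMap.sum_apply, hl, hr, mul_assoc]

theorem aux_ad_p {R : Type*} [Ring R] {p : ℕ} (hp : p.Prime) (hp2 : 2 < p) (hR : (p : R) = 0)
    (a x : R) : (fun z => a * z - z * a)^[p] x = a ^ p * x - x * a ^ p := by
  obtain ⟨q, hq⟩ : ∃ q, p = q + 1 := ⟨p - 1, by have := hp.pos; omega⟩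
  have h1 : (fun z => a * z - z * a)^[p] x
      = a * ((fun z => a * z - z * a)^[p - 1] x) - ((fun z => a * z - z * a)^[p - 1] x) * a := by
    subst hq
    rw [Function.iterate_succ_apply']; rfl
  rw [h1, aux_ad hp hp2 hR, Finset.mul_sum, Finset.sum_mul]
  subst hq
  simp only [Nat.add_sub_cancel]
  rw [Finset.sum_range_succ, Finset.sum_range_succ']
  have : ∀ m ∈ Finset.range q, a * (a ^ m * x * a ^ (q - m))
      = a ^ (m + 1) * x * a ^ (q - (m + 1)) * a := by
    intro m hm
    rw [Finset.mem_range] at hm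
    have : q - m = q - (m + 1) + 1 := by omega
    rw [this, pow_succ' a m, pow_succ a (q - (m+1))]
    simp only [mul_assoc]
  rw [Finset.sum_congr rfl this]
  simp only [Nat.sub_self, pow_zero, mul_one, one_mul, Nat.sub_zero]
  rw [← mul_assoc, ← pow_succ', mul_assoc x, ← pow_succ]
  abel

/-- A (non-unital) quantized subalgebra. -/
structure QSub (k : Type*) [Field k] {B : Type*} [Ring B] [Algebra k B] (h : B) (S : Set B) :
    Prop where
  cen : ∀ b : B, h * b = b * h
  hmem : h ∈ S
  add : ∀ a ∈ S, ∀ b ∈ S, a + b ∈ S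
  smul : ∀ (c : k), ∀ a ∈ S, c • a ∈ S
  mul : ∀ a ∈ S, ∀ b ∈ S, a * b ∈ S
  br : ∀ a ∈ S, ∀ b ∈ S, ∃ c ∈ S, h * c = a * b - b * a

/-- The set `h ^ n * S`. -/
def hS {B : Type*} [Ring B] (h : B) (S : Set B) (n : ℕ) : Set B := {b | ∃ c ∈ S, h ^ n * c = b}

section
variable {k : Type*} [Field k] {B : Type*} [Ring B] [Algebra k B] {h : B} {S : Set B}

theorem QSub.cenpow (Q : QSub k h S) (n : ℕ) (b : B) : h ^ n * b = b * h ^ n :=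
  (Commute.pow_left (Q.cen b) n : Commute (h ^ n) b)

theorem QSub.zero (Q : QSub k h S) : (0 : B) ∈ S := by
  simpa using Q.smul 0 h Q.hmem

theorem QSub.I_add (Q : QSub k h S) {n : ℕ} {a b : B} (ha : a ∈ hS h S n) (hb : b ∈ hS h S n) :
    a + b ∈ hS h S n := by
  obtain ⟨c, hc, rfl⟩ := ha
  obtain ⟨d, hd, rfl⟩ := hb
  exact ⟨c + d, Q.add _ hc _ hd, mul_add _ _ _⟩

theorem QSub.I_smul (Q : QSub k h S) {n : ℕ} {a : B} (c : k) (ha : a ∈ hS h S n) :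
    c • a ∈ hS h S n := by
  obtain ⟨d, hd, rfl⟩ := ha
  exact ⟨c • d, Q.smul _ _ hd, by simp⟩

theorem QSub.I_neg (Q : QSub k h S) {n : ℕ} {a : B} (ha : a ∈ hS h S n) :
    -a ∈ hS h S n := by
  simpa using Q.I_smul (-1) ha

theorem QSub.I_sub (Q : QSub k h S) {n : ℕ} {a b : B} (ha : a ∈ hS h S n) (hb : b ∈ hS h S n) :
    a - b ∈ hS h S n := by
  rw [sub_eq_add_neg]; exact Q.I_add ha (Q.I_neg hb)

theorem QSub.I_zero (Q : QSub k h S) {n : ℕ} : (0 : B) ∈ hS h S n := ⟨0, Q.zero, by simp⟩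

theorem QSub.I_sum (Q : QSub k h S) {n : ℕ} {ι : Type*} (s : Finset ι) (f : ι → B)
    (hf : ∀ i ∈ s, f i ∈ hS h S n) : ∑ i ∈ s, f i ∈ hS h S n :=
  Finset.sum_induction f (· ∈ hS h S n) (fun _ _ => Q.I_add) Q.I_zero hf

theorem QSub.I_mulL (Q : QSub k h S) {n : ℕ} {a b : B} (ha : a ∈ S) (hb : b ∈ hS h S n) :
    a * b ∈ hS h S n := by
  obtain ⟨d, hd, rfl⟩ := hb
  exact ⟨a * d, Q.mul _ ha _ hd, by rw [← mul_assoc, Q.cenpow, mul_assoc]⟩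

theorem QSub.I_mulR (Q : QSub k h S) {n : ℕ} {a b : B} (ha : a ∈ S) (hb : b ∈ hS h S n) :
    b * a ∈ hS h S n := by
  obtain ⟨d, hd, rfl⟩ := hb
  exact ⟨d * a, Q.mul _ hd _ ha, by rw [← mul_assoc]⟩

theorem QSub.I_br (Q : QSub k h S) {n : ℕ} {a b : B} (ha : a ∈ S) (hb : b ∈ hS h S n) :
    a * b - b * a ∈ hS h S (n + 1) := by
  obtain ⟨d, hd, rfl⟩ := hb
  obtain ⟨c, hc, e⟩ := Q.br a ha d hd
  refine ⟨c, hc, ?_⟩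
  rw [pow_succ, mul_assoc, e, mul_sub, ← mul_assoc, ← mul_assoc, ← mul_assoc, Q.cenpow n a]

theorem QSub.I_down (Q : QSub k h S) {n : ℕ} {b : B} (hb : b ∈ hS h S (n + 1)) :
    b ∈ hS h S n := by
  obtain ⟨d, hd, rfl⟩ := hb
  exact ⟨h * d, Q.mul _ Q.hmem _ hd, by rw [pow_succ, mul_assoc]⟩

theorem QSub.pow_mem (Q : QSub k h S) {a : B} (ha : a ∈ S) {n : ℕ} (hn : n ≠ 0) : a ^ n ∈ S := by
  induction n with
  | zero => exact absurd rfl hn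
  | succ n ih =>
    rcases eq_or_ne n 0 with rfl | h0
    · simpa using ha
    · rw [pow_succ]; exact Q.mul _ (ih h0) _ ha

theorem aux_charB (k : Type*) [Field k] (B : Type*) [Ring B] [Algebra k B] (p : ℕ) [CharP k p] :
    (p : B) = 0 := by
  rw [← map_natCast (algebraMap k B), CharP.cast_eq_zero, map_zero]

open Polynomial in
theorem aux_deriv_pow {R : Type*} [Ring R] (f : R[X]) (n : ℕ) :
    derivative (f ^ n) = ∑ m ∈ Finset.range n, f ^ m * derivative f * f ^ (n - 1 - m) := by
  induction n with
  | zero => simp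
  | succ n ih =>
    rw [pow_succ, derivative_mul, ih, Finset.sum_range_succ, Finset.sum_mul]
    congr 1
    · refine Finset.sum_congr rfl fun m hm => ?_
      rw [Finset.mem_range] at hm
      have : n + 1 - 1 - m = n - 1 - m + 1 := by omega
      rw [this, pow_succ]; simp only [mul_assoc]
    · simp

open Polynomial in
theorem QSub.jacobson (Q : QSub k h S) {p : ℕ} (hp : p.Prime) (hp2 : 2 < p) [CharP k p]
    {x y : B} (hx : x ∈ S) (hy : y ∈ S) :
    (x + y) ^ p - x ^ p - y ^ p ∈ hS h S (p - 1) := by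
  let f : B[X] := C x * X + C y
  have hB : (p : B) = 0 := aux_charB k B p
  have hBX : (p : B[X]) = 0 := by rw [← C_eq_natCast, hB, C_0]
  have hd : derivative f = C x := by simp [f]
  have hcoef : ∀ n : ℕ, ∀ j, (((fun z => f * z - z * f)^[n] (C x)).coeff j) ∈ hS h S n := by
    intro n
    induction n with
    | zero =>
      intro j
      rw [Function.iterate_zero_apply, coeff_C]
      split_ifs
      · exact ⟨x, hx, by simp⟩
      · exact Q.I_zero
    | succ n ih =>
      intro j
      rw [Function.iterate_succ_apply']
      generalize (fun z => f * z - z * f)^[n] (C x) = g at ih ⊢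
      have e1 : f * g - g * f = (C x * g - g * C x) * X + (C y * g - g * C y) := by
        simp only [f, add_mul, mul_add, sub_mul]
        rw [mul_assoc (C x), X_mul, ← mul_assoc, ← mul_assoc]
        abel
      rw [e1, coeff_add]
      refine Q.I_add ?_ ?_
      · cases j with
        | zero => simpa using Q.I_zero
        | succ j =>
          rw [coeff_mul_X, coeff_sub, coeff_C_mul, coeff_mul_C]
          exact Q.I_br hx (ih j)
      · rw [coeff_sub, coeff_C_mul, coeff_mul_C]
        exact Q.I_br hy (ih j)
  have hder : derivative (f ^ p) = (fun z => f * z - z * f)^[p - 1] (C x) := by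
    rw [aux_ad hp hp2 hBX, aux_deriv_pow, hd]
  have hmid : ∀ i, i + 1 < p → (f ^ p).coeff (i + 1) ∈ hS h S (p - 1) := by
    intro i hi
    have h1 := hcoef (p - 1) i
    rw [← hder, coeff_derivative] at h1
    have hk : ((i : k) + 1) ≠ 0 := by
      intro h0
      have : ((i + 1 : ℕ) : k) = 0 := by push_cast; exact h0
      rw [CharP.cast_eq_zero_iff k p] at this
      exact absurd (Nat.le_of_dvd (Nat.succ_pos i) this) (by omega)
    have h2 := Q.I_smul ((i : k) + 1)⁻¹ h1
    have h3 : ((i : k) + 1)⁻¹ • ((f ^ p).coeff (i + 1) * ((i : B) + 1)) = (f ^ p).coeff (i + 1) := by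
      have : ((i : B) + 1) = algebraMap k B ((i : k) + 1) := by simp
      rw [this, ← Algebra.commutes, ← Algebra.smul_def, smul_smul, inv_mul_cancel₀ hk, one_smul]
    rwa [h3] at h2
  have hfd : f.natDegree ≤ 1 := natDegree_linear_le
  have hdeg : (f ^ p).natDegree ≤ p := by
    simpa using natDegree_pow_le_of_le p hfd
  have htop : (f ^ p).coeff p = x ^ p := by
    have := coeff_pow_of_natDegree_le (m := p) hfd
    rw [mul_one] at this
    rw [this]; simp [f]
  have hbot : (f ^ p).coeff 0 = y ^ p := by
    have : ∀ n : ℕ, (f ^ n).coeff 0 = y ^ n := by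
      intro n
      induction n with
      | zero => simp
      | succ n ih => rw [pow_succ, mul_coeff_zero, ih, pow_succ]; simp [f]
    exact this p
  have heval : (f ^ p).eval 1 = (x + y) ^ p := by
    let φ : B[X] →+* B := eval₂RingHom' (RingHom.id B) 1 (fun a => Commute.one_right _)
    have h1 : ∀ g, φ g = g.eval 1 := fun g => rfl
    rw [← h1, map_pow, h1]; simp [f]
  rw [eval_eq_sum_range' (Nat.lt_succ_of_le hdeg)] at heval
  simp only [one_pow, mul_one] at heval
  obtain ⟨q, hq⟩ : ∃ q, p = q + 1 := ⟨p - 1, by have := hp.pos; omega⟩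
  have heval2 : (x + y) ^ p - x ^ p - y ^ p = ∑ i ∈ Finset.range q, (f ^ p).coeff (i + 1) := by
    rw [← heval, Finset.sum_range_succ, htop]
    have : Finset.range p = Finset.range (q + 1) := by rw [hq]
    rw [this, Finset.sum_range_succ', hbot]
    abel
  rw [heval2]
  refine Q.I_sum _ _ fun i hi => hmid i ?_
  rw [Finset.mem_range] at hi
  omega

theorem QSub.ad_pow (Q : QSub k h S) {p : ℕ} (hp : p.Prime) (hp2 : 2 < p) [CharP k p]
    {x y : B} (hx : x ∈ S) (hy : y ∈ S) :
    x ^ p * y - y * x ^ p ∈ hS h S (p - 1) := by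
  have hB : (p : B) = 0 := aux_charB k B p
  rw [← aux_ad_p hp hp2 hB]
  have : ∀ n, (fun z => x * z - z * x)^[n] y ∈ hS h S n := by
    intro n
    induction n with
    | zero => exact ⟨y, hy, by simp⟩
    | succ n ih => rw [Function.iterate_succ_apply']; exact Q.I_br hx ih
  have h1 := this p
  obtain ⟨q, rfl⟩ : ∃ q, p = q + 1 := ⟨p - 1, by have := hp.pos; omega⟩
  exact Q.I_down h1

theorem QSub.mult (Q : QSub k h S) {p : ℕ} (hp : p.Prime) (hp2 : 2 < p) [CharP k p]
    {x y : B} (hx : x ∈ S) (hy : y ∈ S) :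
    (x * y) ^ p - x ^ p * y ^ p ∈ hS h S (p - 1) := by
  have hp0 : p ≠ 0 := hp.ne_zero
  obtain ⟨c, hc, e⟩ := Q.br y hy x hx
  have hxy := Q.mul _ hx _ hy
  have hyx := Q.mul _ hy _ hx
  have hX := Q.pow_mem hx hp0
  have hY := Q.pow_mem hy hp0
  have hs := Q.add _ hx _ hy
  have hSm := Q.pow_mem hs hp0
  have hhc := Q.mul _ Q.hmem _ hc
  -- F(yx) = F(xy)
  have h1 := Q.jacobson hp hp2 hxy hhc
  have e1 : x * y + h * c = y * x := by rw [e]; abel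
  have h2 : (h * c) ^ p ∈ hS h S (p - 1) := by
    refine ⟨h * c ^ p, Q.mul _ Q.hmem _ (Q.pow_mem hc hp0), ?_⟩
    rw [(show Commute h c from Q.cen c).mul_pow, ← mul_assoc, ← pow_succ,
      Nat.sub_add_cancel hp.one_le]
  rw [e1] at h1
  -- F(xy + yx)
  have h3 := Q.jacobson hp hp2 hxy hyx
  have h4 := Q.jacobson hp hp2 (Q.mul _ hx _ hx) (Q.mul _ hy _ hy)
  have h5 := Q.jacobson hp hp2 (Q.add _ (Q.mul _ hx _ hx) _ (Q.mul _ hy _ hy))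
    (Q.add _ hxy _ hyx)
  have e5 : x * x + y * y + (x * y + y * x) = (x + y) * (x + y) := by
    rw [add_mul, mul_add, mul_add]; abel
  have sq : ∀ z : B, (z * z) ^ p = z ^ p * z ^ p := fun z => (Commute.refl z).mul_pow p
  rw [e5, sq] at h5
  rw [sq, sq] at h4
  have h6 := Q.jacobson hp hp2 hx hy
  have h7 := Q.I_mulR hSm h6
  have h8 := Q.I_mulL (Q.add _ hX _ hY) h6
  have h9 := Q.ad_pow hp hp2 hx hY
  have key : (x * y) ^ p - x ^ p * y ^ p + ((x * y) ^ p - x ^ p * y ^ p) ∈ hS h S (p - 1) := by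
    have := Q.I_sub (Q.I_sub (Q.I_sub (Q.I_sub (Q.I_sub (Q.I_sub (Q.I_sub
      (Q.I_add h7 h8) h5) h4) h3) h1) h2) h9) Q.I_zero
    convert this using 1
    generalize (x + y) ^ p = s
    noncomm_ring
  have hk : (2 : k) ≠ 0 := by
    intro h0
    have : ((2 : ℕ) : k) = 0 := by push_cast; exact h0
    rw [CharP.cast_eq_zero_iff k p] at this
    exact absurd (Nat.le_of_dvd (by norm_num) this) (by omega)
  have := Q.I_smul (2 : k)⁻¹ key
  rwa [← two_smul k, smul_smul, inv_mul_cancel₀ hk, one_smul] at this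

end

theorem aux_QEval_X {k : Type*} [Field k] {A : Type*} [Ring A] [Algebra k A]
    {hA : A} {bra : A → A → A} {u v : A} {q : Amb k} {w : A} (hq : QEval k hA bra u v q w) :
    ∃ q' : Amb k, q = Polynomial.X * q' := by
  induction hq with
  | X => exact ⟨_, (Polynomial.X_mul).symm⟩
  | Y => exact ⟨_, (Polynomial.X_mul).symm⟩
  | h => exact ⟨1, by simp [he]⟩
  | add _ _ h1 h2 =>
    obtain ⟨a, rfl⟩ := h1
    obtain ⟨b, rfl⟩ := h2
    exact ⟨a + b, (mul_add _ _ _).symm⟩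
  | smul c _ h1 =>
    obtain ⟨a, rfl⟩ := h1
    exact ⟨c • a, by rw [mul_smul_comm]⟩
  | mul _ _ h1 h2 =>
    obtain ⟨a, rfl⟩ := h1
    obtain ⟨b, rfl⟩ := h2
    exact ⟨a * (Polynomial.X * b), by rw [mul_assoc]⟩
  | bracket _ _ e h1 h2 =>
    obtain ⟨a, rfl⟩ := h1
    obtain ⟨b, rfl⟩ := h2
    refine ⟨a * b - b * a, ?_⟩
    have hr : IsLeftRegular (Polynomial.X : Amb k) := Polynomial.isRegular_X.left
    apply hr
    change he k * _ = _
    rw [e]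
    beta_reduce
    rw [mul_sub, mul_sub]
    congr 1
    · rw [mul_assoc, ← mul_assoc a, ← Polynomial.X_mul, mul_assoc]
    · rw [mul_assoc, ← mul_assoc b, ← Polynomial.X_mul, mul_assoc]

theorem aux_QSub {k : Type*} [Field k] {A : Type*} [Ring A] [Algebra k A]
    {hA : A} {bra : A → A → A} (hcen : ∀ b : A, hA * b = b * hA)
    (hbra : ∀ a b : A, hA * bra a b = a * b - b * a) (u v : A) :
    QSub k ((he k, hA) : Amb k × A) {z | QEval k hA bra u v z.1 z.2} where
  cen b := Prod.ext (Polynomial.X_mul) (hcen b.2)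
  hmem := QEval.h
  add _ ha _ hb := QEval.add ha hb
  smul c _ ha := QEval.smul c ha
  mul _ ha _ hb := QEval.mul ha hb
  br a ha b hb := by
    obtain ⟨a', e1⟩ := aux_QEval_X ha
    obtain ⟨b', e2⟩ := aux_QEval_X hb
    have e : he k * (Polynomial.X * (a' * b' - b' * a')) = a.1 * b.1 - b.1 * a.1 := by
      rw [e1, e2, he, mul_sub, mul_sub]
      congr 1
      · rw [mul_assoc, ← mul_assoc a', ← Polynomial.X_mul, mul_assoc]
      · rw [mul_assoc, ← mul_assoc b', ← Polynomial.X_mul, mul_assoc]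
    exact ⟨(_, bra a.2 b.2), QEval.bracket ha hb e, Prod.ext e (hbra _ _)⟩

/-- Let `A` be a restricted quantized algebra over `k` (`char k = p > 2`) which
is flat (has no `h`-torsion) over `k[[h]]`.  Define `s(x) = x^p - h^(p-1)·x^[p]`.
Then `s` is additive, multiplicative, has central image, vanishes on `h·A`
(hence descends to a map `A/h → A`), exhibiting `A` as a Frobenius-constant
quantization of `A/h`. -/
theorem statement13 {k A : Type*} [Field k] [Ring A]
    [Algebra (PowerSeries k) A] [Algebra k A]
    [IsScalarTower k (PowerSeries k) A]
    {p : ℕ} (hp : p.Prime) (hp2 : 2 < p) [CharP k p]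
    (h : A) (hdef : h = algebraMap (PowerSeries k) A PowerSeries.X)
    -- flatness: no h-torsion
    (htf : ∀ a : A, h * a = 0 → a = 0)
    (bra : A → A → A)
    -- quantized algebra axioms for the bracket
    (hbra : ∀ a b : A, h * bra a b = a * b - b * a)
    (hbadd : ∀ x y z : A, bra (x + y) z = bra x z + bra y z)
    (hbsmul : ∀ (c : k) (x y : A), bra (c • x) y = c • bra x y)
    (hbh : ∀ x y : A, bra (h * x) y = h * bra x y)
    (hbanti : ∀ x y : A, bra x y = - bra y x)
    (hbjac : ∀ x y z : A, bra x (bra y z) = bra (bra x y) z + bra y (bra x z))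
    (hbleib : ∀ x y z : A, bra x (y * z) = bra x y * z + y * bra x z)
    -- the restricted structure x ↦ pf x = x^[p]
    (pf : A → A)
    (hres1 : ∀ x y : A, bra (pf x) y = (fun z => bra x z)^[p] y)
    (hres2 : ∀ (c : k) (x : A), pf (c • x) = c ^ p • pf x)
    (hresL : ∀ x y w : A, IsLval k p h bra x y w →
      pf (x + y) = pf x + pf y + w)
    (hresh : pf h = h)
    (hresP : ∀ x y w : A, IsPval k p h bra x y w →
      pf (x * y) = x ^ p * pf y + pf x * y ^ p - h ^ (p - 1) * (pf x * pf y) + w) :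
    -- s(x) := x^p - h^(p-1)·x^[p] is additive, multiplicative, central,
    -- kills h·A, and descends modulo h
    (∀ x y : A, (x + y) ^ p - h ^ (p - 1) * pf (x + y)
        = (x ^ p - h ^ (p - 1) * pf x) + (y ^ p - h ^ (p - 1) * pf y)) ∧
    (∀ x y : A, (x * y) ^ p - h ^ (p - 1) * pf (x * y)
        = (x ^ p - h ^ (p - 1) * pf x) * (y ^ p - h ^ (p - 1) * pf y)) ∧
    (∀ x y : A, (x ^ p - h ^ (p - 1) * pf x) * y = y * (x ^ p - h ^ (p - 1) * pf x)) ∧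
    (∀ x : A, (h * x) ^ p - h ^ (p - 1) * pf (h * x) = 0) ∧
    (∀ x y : A, (∃ c : A, x - y = h * c) →
      x ^ p - h ^ (p - 1) * pf x = y ^ p - h ^ (p - 1) * pf y) := by
  have hcen : ∀ b : A, h * b = b * h := fun b => by rw [hdef]; exact Algebra.commutes _ _
  have hcp : ∀ (n : ℕ) (b : A), h ^ n * b = b * h ^ n := fun n b =>
    (Commute.pow_left (hcen b) n : Commute (h ^ n) b)
  have hA : (p : A) = 0 := aux_charB k A p
  have add : ∀ x y : A, (x + y) ^ p - h ^ (p - 1) * pf (x + y)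
        = (x ^ p - h ^ (p - 1) * pf x) + (y ^ p - h ^ (p - 1) * pf y) := by
    intro x y
    obtain ⟨⟨q, w⟩, hq, e⟩ := (aux_QSub (k := k) hcen hbra x y).jacobson hp hp2
      (x := (Xe k, x)) (y := (Ye k, y)) QEval.X QEval.Y
    have e1 := congrArg Prod.fst e
    have e2 := congrArg Prod.snd e
    simp only [Prod.fst_mul, Prod.snd_mul, Prod.fst_sub, Prod.snd_sub, Prod.pow_fst, Prod.pow_snd,
      Prod.fst_add, Prod.snd_add] at e1 e2
    rw [hresL x y w ⟨q, e1, hq⟩, mul_add, mul_add, e2]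
    abel
  have mul : ∀ x y : A, (x * y) ^ p - h ^ (p - 1) * pf (x * y)
        = (x ^ p - h ^ (p - 1) * pf x) * (y ^ p - h ^ (p - 1) * pf y) := by
    intro x y
    obtain ⟨⟨q, w⟩, hq, e⟩ := (aux_QSub (k := k) hcen hbra x y).mult hp hp2
      (x := (Xe k, x)) (y := (Ye k, y)) QEval.X QEval.Y
    have e1 := congrArg Prod.fst e
    have e2 := congrArg Prod.snd e
    simp only [Prod.fst_mul, Prod.snd_mul, Prod.fst_sub, Prod.snd_sub, Prod.pow_fst, Prod.pow_snd,
      Prod.fst_add, Prod.snd_add] at e1 e2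
    rw [hresP x y w ⟨q, e1, hq⟩, mul_add, e2]
    have e3 : x ^ p * (h ^ (p - 1) * pf y) = h ^ (p - 1) * (x ^ p * pf y) := by
      rw [← mul_assoc, ← hcp, mul_assoc]
    have e4 : (h ^ (p - 1) * pf x) * (h ^ (p - 1) * pf y)
        = h ^ (p - 1) * (h ^ (p - 1) * (pf x * pf y)) := by
      rw [mul_assoc, ← mul_assoc (pf x), ← hcp, mul_assoc]
    rw [sub_mul, mul_sub (x ^ p), mul_sub (h ^ (p - 1) * pf x), e3, e4, mul_sub, mul_add, mul_assoc]
    abel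
  have zero : ∀ x : A, (h * x) ^ p - h ^ (p - 1) * pf (h * x) = 0 := by
    intro x
    rw [mul, hresh, ← pow_succ, Nat.sub_add_cancel hp.one_le, sub_self, zero_mul]
  refine ⟨add, mul, ?_, zero, ?_⟩
  · intro x y
    have h1 : ∀ n : ℕ, (fun z => x * z - z * x)^[n] y = h ^ n * (fun z => bra x z)^[n] y := by
      intro n
      induction n with
      | zero => simp
      | succ n ih =>
        rw [Function.iterate_succ_apply', Function.iterate_succ_apply', ih, pow_succ,
          mul_assoc (h ^ n) h, hbra, mul_sub, ← mul_assoc, ← mul_assoc, ← mul_assoc, hcp n x]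
    have h2 := aux_ad_p hp hp2 hA x y
    rw [h1, ← hres1] at h2
    have h3 : h ^ p = h ^ (p - 1) * h := by rw [← pow_succ, Nat.sub_add_cancel hp.one_le]
    rw [h3, mul_assoc, hbra, mul_sub] at h2
    have h4 : y * (h ^ (p - 1) * pf x) = h ^ (p - 1) * (y * pf x) := by
      rw [← mul_assoc, ← hcp, mul_assoc]
    rw [sub_mul, mul_sub, h4, mul_assoc, sub_eq_sub_iff_sub_eq_sub]
    exact h2.symm
  · rintro x y ⟨c, hc⟩
    have hx : x = y + h * c := by rw [← hc]; abel
    rw [hx, add, zero, add_zero]
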